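/- arXiv:2201.01043 — 2 statements merged into one kernel-verified Lean document; each statement's English description precedes it below -/
import Mathlib

section
/- Let G be a connected K_{1,4}-free finite simple graph and let T be a spanning tree of G chosen so that (C1) |L(T)| is minimum among all spanning trees of G and (C2) |V(R_Stem(T))| is maximum subject to (C1), and suppose B(T) ≠ ∅. Then for every pair of branch vertices b, r of T such that the path P_T[b,r] contains no branch vertex other than b and r, there exists an edge e of P_T[b,r] that has no oblique neighbor in the set L(T) with respect to T. -/
open SimpleGraph Finset List

open scoped Classical

variable {V : Type*}

/-- `G` contains no induced copy of `K_{1,4}` (a star with four edges). -/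
def K14Free (G : SimpleGraph V) : Prop :=
  ¬ ∃ c a b d e : V, a ≠ b ∧ a ≠ d ∧ a ≠ e ∧ b ≠ d ∧ b ≠ e ∧ d ≠ e ∧
    G.Adj c a ∧ G.Adj c b ∧ G.Adj c d ∧ G.Adj c e ∧
    ¬G.Adj a b ∧ ¬G.Adj a d ∧ ¬G.Adj a e ∧ ¬G.Adj b d ∧ ¬G.Adj b e ∧ ¬G.Adj d e

/-- `s` is an independent set of vertices of `G`. -/
def IsIndepFinset (G : SimpleGraph V) (s : Finset V) : Prop :=
  ∀ u ∈ s, ∀ v ∈ s, u ≠ v → ¬G.Adj u v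

/-- The set `L(T)` of leaves (vertices of degree one) of `T`. -/
noncomputable def leafSet [Fintype V] (T : SimpleGraph V) : Finset V :=
  Finset.univ.filter fun v => T.degree v = 1

/-- The set `B(T)` of branch vertices (vertices of degree at least three) of `T`. -/
noncomputable def branchSet [Fintype V] (T : SimpleGraph V) : Finset V :=
  Finset.univ.filter fun v => 3 ≤ T.degree v

/-- `v` is an oblique neighbor of the edge `e` with respect to the (spanning) tree `T` of `G`:
`e = s(a,b)` where `b` is the endpoint of `e` farthest from `v` in `T`, and `v b ∈ E(G)`. -/
def IsObliqueNbr (G T : SimpleGraph V) (e : Sym2 V) (v : V) : Prop :=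
  ∃ a b : V, e = s(a, b) ∧ T.dist v a < T.dist v b ∧ G.Adj v b

/-- The number of vertices of the reducible stem `R_Stem(T)` of `T`: a vertex `v` survives
iff for every leaf `x` of `T` the (unique) path of `T` from `x` to `v` contains a branch
vertex (so exactly the vertices not lying strictly before the first branch vertex on the
path leaving some leaf). -/
noncomputable def rstemCard [Fintype V] (T : SimpleGraph V) : ℕ :=
  {v : V | ∀ x : V, T.degree x = 1 → ∀ p : T.Walk x v, p.IsPath →
    ∃ w ∈ p.support, 3 ≤ T.degree w}.ncard

/-!
Suppose every edge of `P_T[b,r]` has an oblique neighbour that is a leaf. The edge at `r` then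
yields a leaf `x` with `xr ∈ E(G)` whose path to `r` in `T` runs through `b`, and the edge at `b`
yields a leaf `y` in the same way. Let `m` be the neighbour of `r` in `T` towards `b`, `d` the one
towards `y`, and `e` any third one. Every edge of `G` among `x`, `m`, `d`, `e` allows an exchange of
tree edges that contradicts (C1), or possibly (C2) in the case of `xm`; so these four vertices and
`r` induce a `K_{1,4}`.

The leaves after an exchange are found by counting degrees: as soon as the new graph is connected
and has no more edges than `T`, it is a tree, and the degree of a vertex changes by the number of
added minus the number of deleted edges at it.
-/

section ReachableIn

/-- `u` and `v` are joined by a walk of `T` that stays inside `S`; in a tree this says that the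
path `P_T[u,v]` is contained in `S`. -/
def ReachableIn (T : SimpleGraph V) (S : Set V) (u v : V) : Prop :=
  ∃ w : T.Walk u v, ∀ z ∈ w.support, z ∈ S

variable {T : SimpleGraph V} {S S' C : Set V} {u v w : V}

namespace ReachableIn

lemma refl (hu : u ∈ S) : ReachableIn T S u u :=
  ⟨Walk.nil, by simpa using hu⟩

lemma symm (h : ReachableIn T S u v) : ReachableIn T S v u := by
  obtain ⟨p, hp⟩ := h
  exact ⟨p.reverse, by simpa using hp⟩

lemma trans (h : ReachableIn T S u v) (h' : ReachableIn T S v w) : ReachableIn T S u w := by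
  obtain ⟨p, hp⟩ := h
  obtain ⟨q, hq⟩ := h'
  exact ⟨p.append q, fun z hz => ((Walk.mem_support_append_iff _ _).mp hz).elim (hp z) (hq z)⟩

lemma mono (h : ReachableIn T S u v) (hS : S ⊆ S') : ReachableIn T S' u v := by
  obtain ⟨p, hp⟩ := h
  exact ⟨p, fun z hz => hS (hp z hz)⟩

lemma of_adj (ha : T.Adj u v) (hu : u ∈ S) (hv : v ∈ S) : ReachableIn T S u v :=
  ⟨ha.toWalk, by simp [hu, hv]⟩

lemma tail (h : ReachableIn T S u v) (ha : T.Adj v w) (hw : w ∈ S) : ReachableIn T S u w := by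
  obtain ⟨p, hp⟩ := h
  exact ReachableIn.trans ⟨p, hp⟩ (of_adj ha (hp v p.end_mem_support) hw)

lemma left_mem (h : ReachableIn T S u v) : u ∈ S := by
  obtain ⟨p, hp⟩ := h
  exact hp u p.start_mem_support

lemma right_mem (h : ReachableIn T S u v) : v ∈ S :=
  h.symm.left_mem

lemma exists_boundary (h : ReachableIn T S u v) (hu : u ∈ C) (hv : v ∉ C) :
    ∃ a c, a ∈ C ∧ c ∉ C ∧ T.Adj a c ∧ a ∈ S ∧ c ∈ S := by
  obtain ⟨p, hp⟩ := h
  obtain ⟨d, hd, hfst, hsnd⟩ := p.exists_boundary_dart C hu hv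
  exact ⟨d.fst, d.snd, hfst, hsnd, d.adj, hp _ (p.dart_fst_mem_support_of_mem_darts hd),
    hp _ (p.dart_snd_mem_support_of_mem_darts hd)⟩

lemma exists_first_entry (h : ReachableIn T S u v) (hu : u ∉ C) (hv : v ∈ C) :
    ∃ a c, ReachableIn T (S \ C) u a ∧ T.Adj a c ∧ c ∈ S ∩ C := by
  have hv' : v ∉ {z | ReachableIn T (S \ C) u z} := fun h => h.right_mem.2 hv
  obtain ⟨a, c, ha, hc, hac, -, hcS⟩ :=
    h.exists_boundary (C := {z | ReachableIn T (S \ C) u z}) (refl ⟨h.left_mem, hu⟩) hv'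
  have hcC : c ∈ C := by
    by_contra hcC
    exact hc (ReachableIn.tail ha hac ⟨hcS, hcC⟩)
  exact ⟨a, c, ha, hac, hcS, hcC⟩

lemma diff_singleton_of_not_reachableIn (h : ReachableIn T S u v) (hw : ¬ ReachableIn T S w v) :
    ReachableIn T (S \ {w}) u v := by
  obtain ⟨p, hp⟩ := h
  refine ⟨p, fun z hz => ⟨hp z hz, ?_⟩⟩
  rintro rfl
  exact hw ⟨p.dropUntil z hz, fun t ht => hp t (p.support_dropUntil_subset_support hz ht)⟩

end ReachableIn

lemma reachableIn_compl_singleton_of_dist_lt (hT : T.Connected) (h : T.dist u v < T.dist u w) :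
    ReachableIn T {w}ᶜ u v := by
  obtain ⟨p, hp⟩ := hT.exists_walk_length_eq_dist u v
  refine ⟨p, ?_⟩
  rintro z hz rfl
  have hprefix := dist_le (p.takeUntil z hz)
  have := p.length_takeUntil_le_length hz
  omega

lemma not_reachableIn_of_adj_of_adj (hT : T.IsAcyclic) (hu : T.Adj w u) (hv : T.Adj w v)
    (huv : u ≠ v) : ¬ ReachableIn T {w}ᶜ u v := by
  rintro ⟨p, hp⟩
  have hbridge := isAcyclic_iff_forall_adj_isBridge.mp hT hu
  rw [isBridge_iff_forall_walk_mem_edges] at hbridge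
  have hmem := hbridge (Walk.cons hv p.reverse)
  simp only [Walk.edges_cons, Walk.edges_reverse, List.mem_cons, List.mem_reverse,
    Sym2.congr_right, huv, false_or] at hmem
  exact hp w (p.fst_mem_support_of_mem_edges hmem) rfl

end ReachableIn

section Exchange

/-- The graph obtained from `T` by deleting the edges in `R` and adding those in `A`. -/
def exchange (T : SimpleGraph V) (R A : List (Sym2 V)) : SimpleGraph V :=
  T.deleteEdges {e | e ∈ R} ⊔ fromEdgeSet {e | e ∈ A}

variable {G T : SimpleGraph V} {R A : List (Sym2 V)} {S : Set V} {u v : V}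

lemma exchange_adj :
    (exchange T R A).Adj u v ↔ T.Adj u v ∧ s(u, v) ∉ R ∨ s(u, v) ∈ A ∧ u ≠ v := by
  simp [exchange]

lemma exchange_le (hT : T ≤ G) (hA : ∀ e ∈ A, e ∈ G.edgeSet) : exchange T R A ≤ G := by
  intro u v h
  rcases exchange_adj.mp h with h | h
  · exact hT h.1
  · exact hA _ h.1

lemma reachable_exchange_of_mem (h : s(u, v) ∈ A) : (exchange T R A).Reachable u v := by
  by_cases huv : u = v
  · rw [huv]
  · exact (exchange_adj.mpr (Or.inr ⟨h, huv⟩)).reachable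

lemma ReachableIn.reachable_exchange (h : ReachableIn T S u v)
    (hR : ∀ e ∈ R, ∃ z ∈ e, z ∉ S) : (exchange T R A).Reachable u v := by
  by_contra hv
  obtain ⟨a, c, ha, hc, hac, haS, hcS⟩ :=
    h.exists_boundary (C := {z | (exchange T R A).Reachable u z}) (Reachable.refl u) hv
  have hmem : s(a, c) ∉ R := fun hmem => by
    obtain ⟨z, hz, hzS⟩ := hR _ hmem
    rcases Sym2.mem_iff.mp hz with rfl | rfl
    exacts [hzS haS, hzS hcS]
  exact hc (Reachable.trans ha (exchange_adj.mpr (Or.inl ⟨hac, hmem⟩)).reachable)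

lemma connected_exchange (hT : T.Connected)
    (h : ∀ u v, s(u, v) ∈ R → (exchange T R A).Reachable u v) : (exchange T R A).Connected := by
  have := hT.nonempty
  refine ⟨fun u v => ?_⟩
  obtain ⟨p⟩ := hT u v
  induction p with
  | nil => exact Reachable.refl _
  | @cons u v w hadj _ ih =>
    refine Reachable.trans ?_ ih
    by_cases hmem : s(u, v) ∈ R
    · exact h u v hmem
    · exact (exchange_adj.mpr (Or.inl ⟨hadj, hmem⟩)).reachable

/-- The exchange of `R` for `A` keeps `T` connected and does not increase its number of edges.
For a tree `T` the new graph is then again a tree, and `A` is automatically free of repetitions,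
loops and edges that remain in `T`. -/
structure IsExchange (T : SimpleGraph V) (R A : List (Sym2 V)) : Prop where
  nodup : R.Nodup
  subset_edgeSet : ∀ e ∈ R, e ∈ T.edgeSet
  length_le : A.length ≤ R.length
  reachable : ∀ u v, s(u, v) ∈ R → (exchange T R A).Reachable u v

lemma countP_mem_edgeFinset (H : SimpleGraph V) [Fintype H.edgeSet] (v : V)
    [Fintype (H.neighborSet v)] :
    H.edgeFinset.val.countP (v ∈ ·) = H.degree v := by
  rw [← card_incidenceFinset_eq_degree, incidenceFinset_eq_filter, Multiset.countP_eq_card_filter]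
  rfl

namespace IsExchange

-- The left side is contained in the right side, and connectedness forces equal cardinalities.
lemma edgeFinset_val_add [Fintype V] (h : IsExchange T R A) (hT : T.IsTree) :
    (exchange T R A).edgeFinset.val + R = T.edgeFinset.val + A := by
  have hRT : (R : Multiset (Sym2 V)) ≤ T.edgeFinset.val :=
    (Multiset.le_iff_subset (Multiset.coe_nodup.mpr h.nodup)).mpr
      fun e he => mem_edgeFinset.mpr (h.subset_edgeSet e he)
  have hle : (exchange T R A).edgeFinset.val ≤ T.edgeFinset.val - R + A := by
    refine (Multiset.le_iff_subset (Finset.nodup _)).mpr fun e => ?_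
    induction e with | h a b =>
    simp only [Finset.mem_val, mem_edgeFinset, mem_edgeSet, exchange_adj, Multiset.mem_add,
      Multiset.mem_sub_of_nodup (Finset.nodup _), Multiset.mem_coe]
    tauto
  have hcard : (T.edgeFinset.val - R + A).card ≤ (exchange T R A).edgeFinset.val.card := by
    have hedges := hT.card_edgeFinset
    have hconn := (connected_exchange hT.connected h.reachable).card_vert_le_card_edgeSet_add_one
    have hRcard := Multiset.card_le_card hRT
    have hlen := h.length_le
    simp only [Nat.card_eq_fintype_card, ← edgeFinset_card] at hconn
    simp only [Multiset.card_add, Multiset.card_sub hRT, Multiset.coe_card, Finset.card_val] at *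
    omega
  rw [Multiset.eq_of_le_of_card_le hle hcard, add_right_comm, Multiset.sub_add_cancel hRT]

lemma isTree [Finite V] (h : IsExchange T R A) (hT : T.IsTree) : (exchange T R A).IsTree := by
  have := Fintype.ofFinite V
  have hconn := connected_exchange hT.connected h.reachable
  refine isTree_iff_connected_and_card.mpr
    ⟨hconn, le_antisymm ?_ hconn.card_vert_le_card_edgeSet_add_one⟩
  have hval := congrArg Multiset.card (h.edgeFinset_val_add hT)
  have hedges := hT.card_edgeFinset
  have hlen := h.length_le
  simp only [Multiset.card_add, Multiset.coe_card, Finset.card_val] at hval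
  simp only [Nat.card_eq_fintype_card, ← edgeFinset_card]
  omega

lemma degree_add_countP [Fintype V] (h : IsExchange T R A) (hT : T.IsTree) (v : V) :
    (exchange T R A).degree v + R.countP (v ∈ ·) = T.degree v + A.countP (v ∈ ·) := by
  simpa only [Multiset.countP_add, countP_mem_edgeFinset, Multiset.coe_countP] using
    congrArg (Multiset.countP (v ∈ ·)) (h.edgeFinset_val_add hT)

end IsExchange

end Exchange

section Leaves

lemma mem_leafSet [Fintype V] {T : SimpleGraph V} {v : V} : v ∈ leafSet T ↔ T.degree v = 1 := by
  simp [leafSet]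

lemma exists_adj_notMem_of_card_lt_degree {T : SimpleGraph V} {v : V}
    [Fintype (T.neighborSet v)] {s : Finset V} (h : s.card < T.degree v) :
    ∃ w, T.Adj v w ∧ w ∉ s := by
  rw [← card_neighborFinset_eq_degree] at h
  obtain ⟨w, hw, hws⟩ := Finset.exists_mem_notMem_of_card_lt_card h
  exact ⟨w, (mem_neighborFinset _ _ _).mp hw, hws⟩

/-- Condition (C1): `T` is a spanning tree of `G` with the least possible number of leaves. -/
structure IsMinLeafSpanningTree [Fintype V] (G T : SimpleGraph V) : Prop where
  le : T ≤ G
  isTree : T.IsTree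
  card_leafSet_le : ∀ T' : SimpleGraph V, T' ≤ G → T'.IsTree →
    (leafSet T).card ≤ (leafSet T').card

namespace IsMinLeafSpanningTree

variable [Fintype V] {G T : SimpleGraph V} {R A : List (Sym2 V)} {b c d e m r v x y : V}

lemma two_le_degree [Nontrivial V] (hT : IsMinLeafSpanningTree G T) (hv : T.degree v ≠ 1) :
    2 ≤ T.degree v := by
  have := hT.isTree.connected.preconnected.degree_pos_of_nontrivial v
  omega

lemma card_lost_le_card_gained (hT : IsMinLeafSpanningTree G T) (hE : IsExchange T R A)
    (hA : ∀ e ∈ A, e ∈ G.edgeSet) {lost gained : Finset V}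
    (hlost : ∀ u ∈ lost, T.degree u = 1 ∧ (exchange T R A).degree u ≠ 1)
    (hgained : ∀ u, 2 ≤ T.degree u → (exchange T R A).degree u = 1 → u ∈ gained) :
    lost.card ≤ gained.card := by
  have hmin := hT.card_leafSet_le _ (exchange_le hT.le hA) (hE.isTree hT.isTree)
  have hsub : lost ⊆ leafSet T \ leafSet (exchange T R A) := fun u hu => by
    simpa only [Finset.mem_sdiff, mem_leafSet] using hlost u hu
  have hsup : leafSet (exchange T R A) \ leafSet T ⊆ gained := fun u hu => by
    obtain ⟨hu', hu⟩ := Finset.mem_sdiff.mp hu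
    rw [mem_leafSet] at hu' hu
    obtain ⟨w, huw, -⟩ := degree_eq_one_iff_existsUnique_adj.mp hu'
    have : Nontrivial V := ⟨u, w, huw.ne⟩
    exact hgained u (hT.two_le_degree hu) hu'
  calc lost.card ≤ (leafSet T \ leafSet (exchange T R A)).card := Finset.card_le_card hsub
    _ ≤ (leafSet (exchange T R A) \ leafSet T).card := Finset.card_sdiff_le_card_sdiff_iff.mpr hmin
    _ ≤ gained.card := Finset.card_le_card hsup

-- Otherwise `T - cd + xd` has fewer leaves.
lemma not_adj_of_reachableIn_branch (hT : IsMinLeafSpanningTree G T) (hx : T.degree x = 1)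
    (hcd : T.Adj c d) (hc : 3 ≤ T.degree c) (hxc : ReachableIn T {d}ᶜ x c) : ¬ G.Adj x d := by
  intro hxd
  have hE : IsExchange T [s(c, d)] [s(x, d)] := by
    refine ⟨by simp, by simpa using hcd, by simp, ?_⟩
    have hcx := hxc.symm.reachable_exchange (R := [s(c, d)]) (A := [s(x, d)]) (by simp)
    have hxd' : (exchange T [s(c, d)] [s(x, d)]).Reachable x d :=
      reachable_exchange_of_mem (by simp)
    simp only [List.mem_singleton, Sym2.eq_iff]
    grind [Reachable.trans, Reachable.symm]
  have hdeg := hE.degree_add_countP hT.isTree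
  simp only [List.countP_singleton, Sym2.mem_iff, decide_eq_true_eq] at hdeg
  have := hT.card_lost_le_card_gained hE (by simpa using hxd) (lost := {x}) (gained := ∅)
    (by grind [hxd.ne]) (by grind [hxd.ne])
  simp at this

lemma not_adj_of_adj_branch_of_reachableIn (hT : IsMinLeafSpanningTree G T) (hx : T.degree x = 1)
    (hr : 3 ≤ T.degree r) (hmr : T.Adj m r) (hxm : ReachableIn T {r}ᶜ x m) (hd : T.Adj r d)
    (hdm : d ≠ m) : ¬ G.Adj x d := by
  have hdm' := not_reachableIn_of_adj_of_adj hT.isTree.isAcyclic hd hmr.symm hdm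
  have hxm' : ReachableIn T {d}ᶜ x m :=
    (hxm.diff_singleton_of_not_reachableIn hdm').mono Set.inter_subset_right
  exact hT.not_adj_of_reachableIn_branch hx hd hr (hxm'.tail hmr hd.ne)

-- Otherwise `T - rd - mr + md + xr` has fewer leaves.
lemma not_adj_of_adj_branch (hT : IsMinLeafSpanningTree G T) (hx : T.degree x = 1)
    (hr : 3 ≤ T.degree r) (hxr : G.Adj x r) (hmr : T.Adj m r) (hxm : ReachableIn T {r}ᶜ x m)
    (hd : T.Adj r d) (hdm : d ≠ m) : ¬ G.Adj m d := by
  intro hmd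
  set R := [s(r, d), s(m, r)] with hR
  set A := [s(m, d), s(x, r)] with hA
  have hE : IsExchange T R A := by
    refine ⟨?_, by simp [hR, hd, hmr], by simp [hR, hA], ?_⟩
    · simp only [hR, List.nodup_cons, List.mem_cons, List.not_mem_nil, Sym2.eq_iff, or_false,
        not_false_eq_true, List.nodup_nil, and_true]
      grind
    have hxm' := hxm.reachable_exchange (R := R) (A := A) (by simp [hR])
    have hmd' : (exchange T R A).Reachable m d := reachable_exchange_of_mem (by simp [hA])
    have hxr' : (exchange T R A).Reachable x r := reachable_exchange_of_mem (by simp [hA])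
    simp only [hR, List.mem_cons, List.not_mem_nil, or_false, Sym2.eq_iff]
    grind [Reachable.trans, Reachable.symm]
  have hdeg := hE.degree_add_countP hT.isTree
  simp only [hR, hA, List.countP_cons, List.countP_nil, Sym2.mem_iff, decide_eq_true_eq] at hdeg
  have := hT.card_lost_le_card_gained hE (by simp [hA, hmd, hxr]) (lost := {x}) (gained := ∅)
    (by grind [hxr.ne, hd.ne, hmr.ne, hmd.ne]) (by grind [hxr.ne, hd.ne, hmr.ne, hmd.ne])
  simp at this

-- Otherwise `T - rd - re - bv + yb + de + xr` has fewer leaves: `x` and `y` are lost and only `v`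
-- can be gained.
lemma not_adj_of_adj_branch_of_adj_branch (hT : IsMinLeafSpanningTree G T)
    (hx : T.degree x = 1) (hy : T.degree y = 1) (hxy : x ≠ y)
    (hb : 3 ≤ T.degree b) (hr : 3 ≤ T.degree r) (hyb : G.Adj y b) (hxr : G.Adj x r)
    (hbv : T.Adj b v) (hvr : v ≠ r) (hd : T.Adj r d) (he : T.Adj r e)
    (hxb : ReachableIn T {r, v}ᶜ x b) (hyd : ReachableIn T {r, v}ᶜ y d)
    (hrv : ReachableIn T {b, d, e}ᶜ r v) : ¬ G.Adj d e := by
  intro hde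
  set R := [s(r, d), s(r, e), s(b, v)] with hR
  set A := [s(y, b), s(d, e), s(x, r)] with hA
  have hx_mem := hxb.left_mem
  have hb_mem := hxb.right_mem
  have hy_mem := hyd.left_mem
  have hd_mem := hyd.right_mem
  have hv_mem := hrv.right_mem
  simp only [Set.mem_compl_iff, Set.mem_insert_iff, Set.mem_singleton_iff, not_or]
    at hx_mem hb_mem hy_mem hd_mem hv_mem
  have hE : IsExchange T R A := by
    refine ⟨?_, by simp [hR, hd, he, hbv], by simp [hR, hA], ?_⟩
    · simp only [hR, List.nodup_cons, List.mem_cons, List.not_mem_nil, Sym2.eq_iff, or_false,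
        not_false_eq_true, List.nodup_nil, and_true]
      grind [hde.ne]
    have hxb' := hxb.reachable_exchange (R := R) (A := A) (by simp [hR])
    have hyd' := hyd.reachable_exchange (R := R) (A := A) (by simp [hR])
    have hrv' := hrv.reachable_exchange (R := R) (A := A) (by simp [hR])
    have hyb' : (exchange T R A).Reachable y b := reachable_exchange_of_mem (by simp [hA])
    have hde' : (exchange T R A).Reachable d e := reachable_exchange_of_mem (by simp [hA])
    have hxr' : (exchange T R A).Reachable x r := reachable_exchange_of_mem (by simp [hA])
    simp only [hR, List.mem_cons, List.not_mem_nil, or_false, Sym2.eq_iff]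
    grind [Reachable.trans, Reachable.symm]
  have hdeg := hE.degree_add_countP hT.isTree
  simp only [hR, hA, List.countP_cons, List.countP_nil, Sym2.mem_iff, decide_eq_true_eq] at hdeg
  have hlost : ∀ u ∈ ({x, y} : Finset V), T.degree u = 1 ∧ (exchange T R A).degree u ≠ 1 := by
    grind [hd.ne, he.ne, hde.ne, hyb.ne]
  have hgained : ∀ u, 2 ≤ T.degree u → (exchange T R A).degree u = 1 → u ∈ ({v} : Finset V) := by
    intro u
    have := hdeg u
    grind [hd.ne, he.ne, hde.ne, hyb.ne]
  have := hT.card_lost_le_card_gained hE (by simp [hA, hyb, hde, hxr]) hlost hgained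
  simp [Finset.card_pair hxy] at this

end IsMinLeafSpanningTree

end Leaves

section ReducibleStem

variable [Fintype V] {G T : SimpleGraph V} {C : Set V} {m n r u v x : V}

/-- `u` lies strictly before the first branch vertex on the path leaving some leaf, that is, `u`
is deleted when the reducible stem of `T` is formed. -/
def Pendant (T : SimpleGraph V) (u : V) : Prop :=
  ∃ z, T.degree z = 1 ∧ ReachableIn T {w | T.degree w < 3} z u

namespace Pendant

lemma of_degree_eq_one (hu : T.degree u = 1) : Pendant T u :=
  ⟨u, hu, ReachableIn.refl (by simp [hu])⟩

lemma tail (h : Pendant T u) (ha : T.Adj u v) (hv : T.degree v < 3) : Pendant T v := by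
  obtain ⟨z, hz, hzu⟩ := h
  exact ⟨z, hz, hzu.tail ha hv⟩

lemma degree_lt_three (h : Pendant T u) : T.degree u < 3 := by
  obtain ⟨z, -, hzu⟩ := h
  exact hzu.right_mem

lemma mem_of_forall_adj (h : Pendant T u) (hleaf : ∀ z, T.degree z = 1 → z ∈ C)
    (hadj : ∀ a c, a ∈ C → T.Adj a c → T.degree a < 3 → T.degree c < 3 → c ∈ C) : u ∈ C := by
  obtain ⟨z, hz, hzu⟩ := h
  by_contra hu
  obtain ⟨a, c, ha, hc, hac, ha3, hc3⟩ := hzu.exists_boundary (hleaf z hz) hu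
  exact hc (hadj a c ha hac ha3 hc3)

end Pendant

lemma rstemCard_eq_ncard (T : SimpleGraph V) : rstemCard T = {v | ¬ Pendant T v}.ncard := by
  unfold rstemCard
  congr 1
  ext v
  constructor
  · rintro h ⟨z, hz, p, hp⟩
    obtain ⟨w, hw, hw3⟩ := h z hz p.bypass p.bypass_isPath
    exact absurd hw3 (not_le.mpr (hp w (p.support_bypass_subset_support hw)))
  · intro h z hz p _
    by_contra! hp
    exact h ⟨z, hz, p, hp⟩

/-- The tree obtained from `T` by detaching the leaf `x` from its neighbour `n` and inserting it
into the edge `mr`. -/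
def moveLeaf (T : SimpleGraph V) (x n m r : V) : SimpleGraph V :=
  exchange T [s(m, r), s(x, n)] [s(x, m), s(x, r)]

/-- The leaf `x` of `T` has neighbour `n` and can be moved into the edge `mr`: this edge is not
incident with `x`, and `m` is its end nearer to `x`. -/
structure IsLeafMove (T : SimpleGraph V) (x n m r : V) : Prop where
  degree_eq_one : T.degree x = 1
  adj_nbr : T.Adj x n
  adj : T.Adj m r
  reachableIn : ReachableIn T {r}ᶜ x m
  ne : x ≠ m

namespace IsLeafMove

lemma ne_right (h : IsLeafMove T x n m r) : x ≠ r := by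
  simpa using h.reachableIn.left_mem

lemma eq_nbr (h : IsLeafMove T x n m r) (hu : T.Adj x u) : u = n :=
  (degree_eq_one_iff_existsUnique_adj.mp h.degree_eq_one).unique hu h.adj_nbr

lemma reachableIn_nbr (h : IsLeafMove T x n m r) : ReachableIn T {r, x}ᶜ n m := by
  obtain ⟨a, c, hma, hac, -, hc⟩ :=
    h.reachableIn.symm.exists_first_entry (C := {x}) (by simpa using h.ne.symm) rfl
  obtain rfl : c = x := hc
  obtain rfl := h.eq_nbr hac.symm
  exact hma.symm.mono fun z hz => by simpa using hz

lemma isExchange (h : IsLeafMove T x n m r) :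
    IsExchange T [s(m, r), s(x, n)] [s(x, m), s(x, r)] := by
  refine ⟨?_, by simp [h.adj, h.adj_nbr], by simp, ?_⟩
  · have := h.ne
    have := h.ne_right
    simp only [List.nodup_cons, List.mem_singleton, Sym2.eq_iff, List.not_mem_nil,
      List.nodup_nil, not_false_eq_true, and_true]
    grind
  have hnm := h.reachableIn_nbr.reachable_exchange (R := [s(m, r), s(x, n)])
    (A := [s(x, m), s(x, r)]) (by simp)
  have hxm : (exchange T [s(m, r), s(x, n)] [s(x, m), s(x, r)]).Reachable x m :=
    reachable_exchange_of_mem (by simp)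
  have hxr : (exchange T [s(m, r), s(x, n)] [s(x, m), s(x, r)]).Reachable x r :=
    reachable_exchange_of_mem (by simp)
  simp only [List.mem_cons, List.not_mem_nil, or_false, Sym2.eq_iff]
  grind [Reachable.trans, Reachable.symm]

lemma degree_moveLeaf (h : IsLeafMove T x n m r) (hT : T.IsTree) (u : V) :
    (moveLeaf T x n m r).degree u + (if u = n then 1 else 0) =
      T.degree u + if u = x then 1 else 0 := by
  have hdeg := h.isExchange.degree_add_countP hT u
  simp only [List.countP_cons, List.countP_nil, Sym2.mem_iff, decide_eq_true_eq] at hdeg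
  unfold moveLeaf
  grind [h.ne, h.ne_right, h.adj.ne, h.adj_nbr.ne]

lemma pendant_nbr (h : IsLeafMove T x n m r) (hn : T.degree n < 3) : Pendant T n :=
  (Pendant.of_degree_eq_one h.degree_eq_one).tail h.adj_nbr hn

lemma pendant_of_pendant_moveLeaf (h : IsLeafMove T x n m r) (hT : T.IsTree)
    (hn : T.degree n < 3) (hm : ¬ Pendant T m) (hr : ¬ Pendant T r)
    (hu : Pendant (moveLeaf T x n m r) u) : Pendant T u ∧ u ≠ x := by
  have hdeg := h.degree_moveLeaf hT
  refine hu.mem_of_forall_adj (C := {u | Pendant T u ∧ u ≠ x}) ?_ ?_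
  · intro z hz
    by_cases hzn : z = n
    · exact hzn ▸ ⟨h.pendant_nbr hn, h.adj_nbr.ne'⟩
    · have := hdeg z
      have := h.degree_eq_one
      exact ⟨Pendant.of_degree_eq_one (by grind), by grind⟩
  · rintro a c ⟨ha, hax⟩ hac - hc
    have := hdeg c
    rcases exchange_adj.mp hac with ⟨hacT, hR⟩ | ⟨hA, -⟩
    · refine ⟨ha.tail hacT (by grind), ?_⟩
      rintro rfl
      exact hR (by simp [h.eq_nbr hacT.symm])
    · simp only [List.mem_cons, List.not_mem_nil, or_false, Sym2.eq_iff] at hA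
      grind

lemma rstemCard_lt (h : IsLeafMove T x n m r) (hT : T.IsTree) (hn : T.degree n < 3)
    (hm : ¬ Pendant T m) (hr : ¬ Pendant T r) :
    rstemCard T < rstemCard (moveLeaf T x n m r) := by
  have hsub := fun u => h.pendant_of_pendant_moveLeaf hT hn hm hr (u := u)
  rw [rstemCard_eq_ncard, rstemCard_eq_ncard]
  refine Set.ncard_lt_ncard (Set.ssubset_iff_exists.mpr ⟨?_, x, ?_, ?_⟩) (Set.toFinite _)
  · exact fun u hu hu' => hu (hsub u hu').1
  · exact fun hx => (hsub x hx).2 rfl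
  · exact fun hx => hx (Pendant.of_degree_eq_one h.degree_eq_one)

lemma card_leafSet_le (h : IsLeafMove T x n m r) (hT : T.IsTree) :
    (leafSet (moveLeaf T x n m r)).card ≤ (leafSet T).card := by
  have hsub : leafSet (moveLeaf T x n m r) ⊆ insert n ((leafSet T).erase x) := fun u hu => by
    have := h.degree_moveLeaf hT u
    have := h.degree_eq_one
    simp only [Finset.mem_insert, Finset.mem_erase, mem_leafSet] at hu ⊢
    grind
  calc (leafSet (moveLeaf T x n m r)).card ≤ ((leafSet T).erase x).card + 1 :=
        (Finset.card_le_card hsub).trans (Finset.card_insert_le _ _)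
    _ = (leafSet T).card := Finset.card_erase_add_one (mem_leafSet.mpr h.degree_eq_one)

end IsLeafMove

/-- Conditions (C1) and (C2): `T` has the largest reducible stem among the spanning trees of `G`
with the least possible number of leaves. -/
structure IsMaxStemSpanningTree (G T : SimpleGraph V) : Prop
    extends IsMinLeafSpanningTree G T where
  rstemCard_le : ∀ T' : SimpleGraph V, T' ≤ G → T'.IsTree →
    (leafSet T').card = (leafSet T).card → rstemCard T' ≤ rstemCard T

-- Otherwise move `x` from its neighbour `n` into the edge `mr`: this loses a leaf if `n` is a
-- branch vertex, and keeps the number of leaves but enlarges the reducible stem if it is not.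
lemma IsMaxStemSpanningTree.not_adj_of_not_pendant (hT : IsMaxStemSpanningTree G T)
    (hx : T.degree x = 1) (hxr : G.Adj x r) (hmr : T.Adj m r) (hxm : ReachableIn T {r}ᶜ x m)
    (hm : ¬ Pendant T m) (hr : ¬ Pendant T r) : ¬ G.Adj x m := by
  intro hadj
  obtain ⟨n, hxn, -⟩ := degree_eq_one_iff_existsUnique_adj.mp hx
  have h : IsLeafMove T x n m r := ⟨hx, hxn, hmr, hxm, hadj.ne⟩
  have hA : ∀ e ∈ [s(x, m), s(x, r)], e ∈ G.edgeSet := by simp [hadj, hxr]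
  by_cases hn : T.degree n < 3
  · have hle : moveLeaf T x n m r ≤ G := exchange_le hT.le hA
    have htree : (moveLeaf T x n m r).IsTree := h.isExchange.isTree hT.isTree
    have hcard := (h.card_leafSet_le hT.isTree).antisymm (hT.card_leafSet_le _ hle htree)
    exact (h.rstemCard_lt hT.isTree hn hm hr).not_ge (hT.rstemCard_le _ hle htree hcard)
  · have hdeg := h.degree_moveLeaf hT.isTree
    unfold moveLeaf at hdeg
    have := hT.card_lost_le_card_gained h.isExchange hA (lost := {x}) (gained := ∅)
      (by grind) (by grind)
    simp at this

end ReducibleStem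

section BranchPath

variable {G T : SimpleGraph V} {b d e r u v w x y : V} {p : T.Walk b r}

/-- The vertices of the walk `p` other than its two ends. -/
def innerVertices (p : T.Walk b r) : Set V :=
  {v | v ∈ p.support ∧ v ≠ b ∧ v ≠ r}

lemma innerVertices_reverse (p : T.Walk b r) : innerVertices p.reverse = innerVertices p := by
  ext v
  simp only [innerVertices, Walk.support_reverse, List.mem_reverse, Set.mem_ofPred_eq]
  tauto

lemma reachableIn_insert_innerVertices (hp : p.IsPath) (hd : d ∈ p.support) (hdr : d ≠ r) :
    ReachableIn T (insert b (innerVertices p)) b d := by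
  refine ⟨p.takeUntil d hd, fun z hz => or_iff_not_imp_left.mpr fun hzb => ?_⟩
  refine ⟨p.support_takeUntil_subset_support hd hz, hzb, ?_⟩
  rintro rfl
  exact Walk.endpoint_notMem_support_takeUntil hp hd hdr.symm hz

lemma ncard_neighborSet_toSubgraph_of_mem_innerVertices (hp : p.IsPath)
    (hu : u ∈ innerVertices p) : (p.toSubgraph.neighborSet u).ncard = 2 := by
  obtain ⟨hu, hub, hur⟩ := hu
  obtain ⟨i, rfl, hi⟩ := Walk.mem_support_iff_exists_getVert.mp hu
  refine hp.ncard_neighborSet_toSubgraph_internal_eq_two ?_ (lt_of_le_of_ne hi ?_)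
  · rintro rfl
    exact hub p.getVert_zero
  · rintro rfl
    exact hur p.getVert_length

lemma ncard_neighborSet (T : SimpleGraph V) (u : V) [Fintype (T.neighborSet u)] :
    (T.neighborSet u).ncard = T.degree u := by
  rw [← card_neighborSet_eq_degree, Set.ncard_eq_toFinset_card', Set.toFinset_card]

variable [Fintype V]

/-- `p` is a path of `T` joining two distinct branch vertices and containing no other branch
vertex. -/
structure IsBranchPath (p : T.Walk b r) : Prop where
  isPath : p.IsPath
  ne : b ≠ r
  three_le_degree_start : 3 ≤ T.degree b
  three_le_degree_end : 3 ≤ T.degree r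
  degree_lt_three : ∀ v ∈ innerVertices p, T.degree v < 3

namespace IsBranchPath

lemma reverse (hp : IsBranchPath p) : IsBranchPath p.reverse :=
  ⟨hp.isPath.reverse, hp.ne.symm, hp.three_le_degree_end, hp.three_le_degree_start,
    by simpa only [innerVertices_reverse] using hp.degree_lt_three⟩

lemma adj_penultimate (hp : IsBranchPath p) : T.Adj p.penultimate r :=
  Walk.adj_penultimate (Walk.not_nil_of_ne hp.ne)

lemma two_le_degree (hp : IsBranchPath p) (hu : u ∈ innerVertices p) : 2 ≤ T.degree u := by
  rw [← ncard_neighborSet, ← ncard_neighborSet_toSubgraph_of_mem_innerVertices hp.isPath hu]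
  exact Set.ncard_le_ncard (p.toSubgraph.neighborSet_subset u) (Set.toFinite _)

lemma mem_support_of_adj (hp : IsBranchPath p) (hu : u ∈ innerVertices p) (huw : T.Adj u w) :
    w ∈ p.support := by
  have hcard : (T.neighborSet u).ncard ≤ (p.toSubgraph.neighborSet u).ncard := by
    rw [ncard_neighborSet_toSubgraph_of_mem_innerVertices hp.isPath hu, ncard_neighborSet]
    exact Nat.le_of_lt_succ (hp.degree_lt_three u hu)
  have hnbr := Set.eq_of_subset_of_ncard_le (p.toSubgraph.neighborSet_subset u) hcard
    (Set.toFinite _)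
  have hw : p.toSubgraph.Adj u w := hnbr.symm.subset huw
  exact p.mem_verts_toSubgraph.mp hw.snd_mem

lemma eq_or_eq_of_adj (hp : IsBranchPath p) (hu : u ∈ innerVertices p) (huw : T.Adj u w)
    (hw : w ∉ innerVertices p) : w = b ∨ w = r := by
  by_contra! h
  exact hw ⟨hp.mem_support_of_adj hu huw, h⟩

lemma not_pendant (hp : IsBranchPath p) (hu : u ∈ innerVertices p) : ¬ Pendant T u := by
  intro h
  refine h.mem_of_forall_adj (C := (innerVertices p)ᶜ) ?_ ?_ hu
  · intro z hz hzp
    have := hp.two_le_degree hzp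
    omega
  · intro a c ha hac ha3 _ hc
    have := hp.three_le_degree_start
    have := hp.three_le_degree_end
    rcases hp.eq_or_eq_of_adj hc hac.symm ha with rfl | rfl <;> omega

lemma reachableIn_start (hp : IsBranchPath p) (h : ReachableIn T {r}ᶜ x u)
    (hx : x ∉ innerVertices p) (hu : u ∈ innerVertices p) :
    ReachableIn T (insert r (innerVertices p))ᶜ x b := by
  obtain ⟨a, c, hxa, hac, -, hc⟩ := h.exists_first_entry hx hu
  have ha := hxa.right_mem
  obtain rfl := (hp.eq_or_eq_of_adj hc hac.symm ha.2).resolve_right ha.1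
  exact hxa.mono fun z hz => by simpa [not_or] using hz

end IsBranchPath

/-- `x` is a leaf of `T` that is adjacent in `G` to the end `r` of `p`, but hangs off the other end:
the path from `x` to `p` in `T` arrives at `b`. -/
structure IsOppositeLeaf (G : SimpleGraph V) (p : T.Walk b r) (x : V) : Prop where
  degree_eq_one : T.degree x = 1
  adj : G.Adj x r
  reachableIn : ReachableIn T (insert r (innerVertices p))ᶜ x b

lemma IsMinLeafSpanningTree.adj_and_reachableIn_of_isObliqueNbr (hT : IsMinLeafSpanningTree G T)
    (hx : T.degree x = 1) (huv : T.Adj u v) (hv : 3 ≤ T.degree v)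
    (h : IsObliqueNbr G T s(u, v) x) : G.Adj x v ∧ ReachableIn T {v}ᶜ x u := by
  obtain ⟨a, c, hac, hdist, hadj⟩ := h
  have hxa := reachableIn_compl_singleton_of_dist_lt hT.isTree.connected hdist
  rcases Sym2.eq_iff.mp hac with ⟨rfl, rfl⟩ | ⟨rfl, rfl⟩
  · exact ⟨hadj, hxa⟩
  · exact absurd hadj (hT.not_adj_of_reachableIn_branch hx huv.symm hv hxa)

lemma IsBranchPath.exists_isOppositeLeaf (hp : IsBranchPath p) (hT : IsMinLeafSpanningTree G T)
    (hcov : ∀ e ∈ p.edges, ∃ s ∈ leafSet T, IsObliqueNbr G T e s) :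
    p.penultimate ∈ innerVertices p ∧ ∃ x, IsOppositeLeaf G p x := by
  have hmr := hp.adj_penultimate
  obtain ⟨x, hx, hobl⟩ :=
    hcov _ (Walk.mk_penultimate_end_mem_edges (Walk.not_nil_of_ne hp.ne))
  rw [mem_leafSet] at hx
  obtain ⟨hxr, hxm⟩ :=
    hT.adj_and_reachableIn_of_isObliqueNbr hx hmr hp.three_le_degree_end hobl
  have hm : p.penultimate ∈ innerVertices p := by
    refine ⟨p.getVert_mem_support _, fun hmb => ?_, hmr.ne⟩
    have hb : 3 ≤ T.degree p.penultimate := by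
      rw [hmb]
      exact hp.three_le_degree_start
    exact hT.not_adj_of_reachableIn_branch hx hmr hb hxm hxr
  have hxp : x ∉ innerVertices p := fun h => by
    have := hp.two_le_degree h
    omega
  exact ⟨hm, x, hx, hxr, hp.reachableIn_start hxm hxp hm⟩

namespace IsOppositeLeaf

lemma reachableIn_penultimate (hx : IsOppositeLeaf G p x) (hp : IsBranchPath p) :
    ReachableIn T {r}ᶜ x p.penultimate := by
  have hbm := reachableIn_insert_innerVertices hp.isPath (p.getVert_mem_support _)
    hp.adj_penultimate.ne
  refine (hx.reachableIn.mono ?_).trans (hbm.mono ?_)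
  · exact Set.compl_subset_compl.mpr (Set.singleton_subset_iff.mpr (Set.mem_insert _ _))
  · rintro z (rfl | hz)
    exacts [hp.ne, hz.2.2]

lemma exists_adj_start (hx : IsOppositeLeaf G p x) (hp : IsBranchPath p) :
    ∃ d, T.Adj b d ∧ ReachableIn T {z | z ∉ p.support} x d := by
  have hxb : x ∉ ({b} : Set V) := by
    rintro rfl
    have := hx.degree_eq_one
    have := hp.three_le_degree_start
    omega
  obtain ⟨d, c, hxd, hdc, -, hc⟩ := hx.reachableIn.exists_first_entry hxb rfl
  obtain rfl : c = b := hc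
  refine ⟨d, hdc.symm, hxd.mono fun z hz hzp => hz.1 ?_⟩
  by_cases hzr : z = r
  · exact Or.inl hzr
  · exact Or.inr ⟨hzp, hz.2, hzr⟩

end IsOppositeLeaf

lemma IsMinLeafSpanningTree.not_adj_of_isOppositeLeaf (hT : IsMinLeafSpanningTree G T)
    (hp : IsBranchPath p) (hv : p.snd ∈ innerVertices p) (hx : IsOppositeLeaf G p x)
    (hy : IsOppositeLeaf G p.reverse y) (hd : T.Adj r d) (he : T.Adj r e)
    (hyd : ReachableIn T {z | z ∉ p.support} y d) (hem : e ≠ p.penultimate) : ¬ G.Adj d e := by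
  have hdp : d ∉ p.support := hyd.right_mem
  have hep : e ∉ p.support :=
    fun h => hem (hT.isTree.isAcyclic.eq_penultimate_of_adj_end hp.isPath he h)
  have hxy : x ≠ y := by
    rintro rfl
    refine not_reachableIn_of_adj_of_adj hT.isTree.isAcyclic hd hp.adj_penultimate.symm ?_
      ((hyd.symm.mono fun z hz => ?_).trans (hx.reachableIn_penultimate hp))
    · rintro rfl
      exact hdp (p.getVert_mem_support _)
    · rintro rfl
      exact hz p.end_mem_support
  have hrv : ReachableIn T (insert r (innerVertices p)) r p.snd := by
    rw [← innerVertices_reverse]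
    exact reachableIn_insert_innerVertices hp.isPath.reverse
      (by simpa only [Walk.support_reverse, List.mem_reverse] using hv.1) hv.2.1
  refine hT.not_adj_of_adj_branch_of_adj_branch hx.degree_eq_one hy.degree_eq_one hxy
    hp.three_le_degree_start hp.three_le_degree_end hy.adj hx.adj
    (Walk.adj_snd (Walk.not_nil_of_ne hp.ne)) hv.2.2 hd he (hx.reachableIn.mono ?_)
    (hyd.mono ?_) (hrv.mono ?_)
  · exact Set.compl_subset_compl.mpr
      (Set.insert_subset_insert (Set.singleton_subset_iff.mpr hv))
  · rintro z hz (rfl | rfl)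
    exacts [hz p.end_mem_support, hz hv.1]
  · have hzp : ∀ z ∈ insert r (innerVertices p), z ∈ p.support ∧ z ≠ b := by
      rintro z (rfl | hz)
      exacts [⟨p.end_mem_support, hp.ne.symm⟩, ⟨hz.1, hz.2.1⟩]
    rintro z hz (rfl | rfl | rfl)
    exacts [(hzp _ hz).2 rfl, hdp (hzp _ hz).1, hep (hzp _ hz).1]

-- `K_{1,4}` is induced by `r`, `x`, the vertex of `p` before `r`, the last vertex `d` before `r` on
-- the path from `y` to `r`, and any third neighbour `e` of `r` in `T`.
lemma IsMaxStemSpanningTree.not_k14Free (hT : IsMaxStemSpanningTree G T) (hp : IsBranchPath p)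
    (hm : p.penultimate ∈ innerVertices p) (hv : p.snd ∈ innerVertices p)
    (hx : IsOppositeLeaf G p x) (hy : IsOppositeLeaf G p.reverse y) : ¬ K14Free G := by
  have hx1 := hx.degree_eq_one
  have hr := hp.three_le_degree_end
  have hmr := hp.adj_penultimate
  have hxm := hx.reachableIn_penultimate hp
  obtain ⟨d, hrd, hyd⟩ := hy.exists_adj_start hp.reverse
  simp only [Walk.support_reverse, List.mem_reverse] at hyd
  have hdm : d ≠ p.penultimate := fun h => hyd.right_mem (h ▸ hm.1)
  obtain ⟨e, hre, he⟩ := exists_adj_notMem_of_card_lt_degree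
    ((Finset.card_le_two (a := p.penultimate) (b := d)).trans_lt hr)
  obtain ⟨hem, hed⟩ : e ≠ p.penultimate ∧ e ≠ d := by simpa using he
  have hxm_ne : x ≠ p.penultimate := fun h => hx.reachableIn.left_mem (Or.inr (h ▸ hm))
  have hx_ne : ∀ u, T.Adj r u → u ≠ p.penultimate → x ≠ u := fun u hu hum hxu =>
    not_reachableIn_of_adj_of_adj hT.isTree.isAcyclic hu hmr.symm hum (hxu ▸ hxm)
  have hxm_adj : ¬ G.Adj x p.penultimate :=
    hT.not_adj_of_not_pendant hx1 hx.adj hmr hxm (hp.not_pendant hm)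
      fun h => h.degree_lt_three.not_ge hr
  have hx_adj : ∀ u, T.Adj r u → u ≠ p.penultimate → ¬ G.Adj x u := fun _ =>
    hT.not_adj_of_adj_branch_of_reachableIn hx1 hr hmr hxm
  have hm_adj : ∀ u, T.Adj r u → u ≠ p.penultimate → ¬ G.Adj p.penultimate u := fun _ =>
    hT.not_adj_of_adj_branch hx1 hr hx.adj hmr hxm
  have hde_adj : ¬ G.Adj d e := hT.not_adj_of_isOppositeLeaf hp hv hx hy hrd hre hyd hem
  exact not_not_intro ⟨r, x, p.penultimate, d, e, hxm_ne, hx_ne d hrd hdm, hx_ne e hre hem,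
    hdm.symm, hem.symm, hed.symm, hx.adj.symm, hT.le hmr.symm, hT.le hrd, hT.le hre, hxm_adj,
    hx_adj d hrd hdm, hx_adj e hre hem, hm_adj d hrd hdm, hm_adj e hre hem, hde_adj⟩

end BranchPath

/-- Let `T` be a spanning tree of the connected `K_{1,4}`-free graph `G`
chosen so that (C1) `|L(T)|` is minimum and (C2) `|V(R_Stem(T))|` is maximum subject to
(C1), with `B(T) ≠ ∅`. Then for every pair of branch vertices `b, r` such that `P_T[b,r]`
contains no branch vertex other than `b` and `r`, some edge of `P_T[b,r]` has no oblique
neighbor in `L(T)` with respect to `T`. -/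
theorem stmt14 {V : Type*} [Fintype V] (G T : SimpleGraph V) (hG : G.Connected)
    (hK : K14Free G) (hT : T ≤ G) (hTree : T.IsTree)
    (hC1 : ∀ T' : SimpleGraph V, T' ≤ G → T'.IsTree →
      (leafSet T).card ≤ (leafSet T').card)
    (hC2 : ∀ T' : SimpleGraph V, T' ≤ G → T'.IsTree →
      (leafSet T').card = (leafSet T).card → rstemCard T' ≤ rstemCard T)
    (hB : (branchSet T).Nonempty) :
    ∀ b r : V, b ∈ branchSet T → r ∈ branchSet T → b ≠ r →
      ∀ p : T.Walk b r, p.IsPath →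
        (∀ v ∈ p.support, 3 ≤ T.degree v → v = b ∨ v = r) →
        ∃ e ∈ p.edges, ∀ s ∈ leafSet T, ¬ IsObliqueNbr G T e s := by
  intro b r hb hr hbr p hpath hint
  simp only [branchSet, Finset.mem_filter, Finset.mem_univ, true_and] at hb hr
  by_contra! hcov
  have hS : IsMaxStemSpanningTree G T := ⟨⟨hT, hTree, hC1⟩, hC2⟩
  have hp : IsBranchPath p := ⟨hpath, hbr, hb, hr, fun v hv => by_contra fun h =>
    (hint v hv.1 (not_lt.mp h)).elim hv.2.1 hv.2.2⟩
  obtain ⟨hm, x, hx⟩ := hp.exists_isOppositeLeaf hS.toIsMinLeafSpanningTree hcov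
  obtain ⟨hv, y, hy⟩ := hp.reverse.exists_isOppositeLeaf hS.toIsMinLeafSpanningTree
    (by simpa only [Walk.edges_reverse, List.mem_reverse] using hcov)
  rw [Walk.penultimate_reverse, innerVertices_reverse] at hv
  exact hS.not_k14Free hp hm hv hx hy hK
end

section
/- Let G be a connected finite simple graph, let T be a spanning tree of G, and let v be a vertex of G. Then the number of edges e of T such that v is an oblique neighbor of e with respect to T equals the degree of v in G. (Indeed, for any vertices v, x of G, vx is an edge of G if and only if v is an oblique neighbor with respect to T of the edge of T joining x to its neighbor in T in the direction toward v.) -/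
open SimpleGraph Finset List

open scoped Classical

variable {V : Type*}

/-!
Root the tree `T` at `v`. Sending each vertex `x ≠ v` to the edge joining it to its parent is a
bijection onto the edges of `T`, and the endpoint of that edge farthest from `v` is `x` itself.
Hence `v` is an oblique neighbor of the edge exactly when `x` is a neighbor of `v` in `G`.
-/

section Parent

variable {T : SimpleGraph V} {v x a : V}

/-- The parent of `x` when the connected graph `T` is rooted at `v`: the next-to-last vertex of a
chosen shortest path from `v` to `x`. It is determined by `v` and `x` when `T` is a tree, and
is the junk value `v` for `x = v`. -/
noncomputable def parent (hT : T.Connected) (v x : V) : V :=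
  (hT.exists_path_of_dist v x).choose.penultimate

/-- The edge joining `x` to its parent when the connected graph `T` is rooted at `v`; the junk value
`s(v, v)`, which is not an edge, for `x = v`. -/
noncomputable def parentEdge (hT : T.Connected) (v x : V) : Sym2 V :=
  s(parent hT v x, x)

theorem parent_adj (hT : T.Connected) (hx : x ≠ v) : T.Adj (parent hT v x) x :=
  Walk.adj_penultimate (Walk.not_nil_of_ne hx.symm)

theorem dist_parent_lt (hT : T.Connected) (hx : x ≠ v) :
    T.dist v (parent hT v x) < T.dist v x := by
  let p := (hT.exists_path_of_dist v x).choose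
  calc T.dist v p.penultimate
    _ ≤ p.dropLast.length := dist_le p.dropLast
    _ < p.length := by
      rw [← Walk.length_dropLast_add_one (Walk.not_nil_of_ne hx.symm)]
      exact Nat.lt_succ_self _
    _ = T.dist v x := (hT.exists_path_of_dist v x).choose_spec.2

theorem exists_isPath_penultimate_eq_of_dist_lt (hadj : T.Adj a x)
    (hlt : T.dist v a < T.dist v x) : ∃ p : T.Walk v x, p.IsPath ∧ p.penultimate = a := by
  have hreach : T.Reachable v a :=
    (Reachable.of_dist_ne_zero (Nat.ne_zero_of_lt hlt)).trans hadj.symm.reachable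
  obtain ⟨q, hq⟩ := hreach.exists_walk_length_eq_dist
  refine ⟨q.concat hadj, Walk.isPath_of_length_eq_dist _ (le_antisymm ?_ (dist_le _)),
    Walk.penultimate_concat q hadj⟩
  rwa [Walk.length_concat, hq]

theorem parent_eq_of_dist_lt (hT : T.IsTree) (hadj : T.Adj a x)
    (hlt : T.dist v a < T.dist v x) : parent hT.connected v x = a := by
  obtain ⟨p, hp, rfl⟩ := exists_isPath_penultimate_eq_of_dist_lt hadj hlt
  have hpath := (hT.connected.exists_path_of_dist v x).choose_spec.1
  exact congrArg Walk.penultimate ((hT.existsUnique_path v x).unique hpath hp)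

theorem parentEdge_eq_of_dist_lt (hT : T.IsTree) (hadj : T.Adj a x)
    (hlt : T.dist v a < T.dist v x) : parentEdge hT.connected v x = s(a, x) := by
  rw [parentEdge, parent_eq_of_dist_lt hT hadj hlt]

theorem injOn_parentEdge (hT : T.Connected) (v : V) : Set.InjOn (parentEdge hT v) {v}ᶜ := by
  intro x hx y hy hedge
  rcases Sym2.eq_iff.mp hedge with ⟨-, h⟩ | ⟨hparent_x, hparent_y⟩
  · exact h
  · have hyx : T.dist v y < T.dist v x := hparent_x ▸ dist_parent_lt hT hx
    have hxy : T.dist v x < T.dist v y := hparent_y ▸ dist_parent_lt hT hy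
    exact absurd hxy hyx.asymm

theorem surjOn_parentEdge (hT : T.IsTree) (v : V) :
    Set.SurjOn (parentEdge hT.connected v) {v}ᶜ T.edgeSet := by
  have ne_root {a b : V} (hlt : T.dist v a < T.dist v b) : b ≠ v := by
    rintro rfl
    simp at hlt
  rintro ⟨a, b⟩ (hadj : T.Adj a b)
  rcases (hT.dist_ne_of_adj v hadj).lt_or_gt with hlt | hlt
  · exact ⟨b, ne_root hlt, parentEdge_eq_of_dist_lt hT hadj hlt⟩
  · exact ⟨a, ne_root hlt, (parentEdge_eq_of_dist_lt hT hadj.symm hlt).trans Sym2.eq_swap⟩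

theorem bijOn_parentEdge (hT : T.IsTree) (v : V) :
    Set.BijOn (parentEdge hT.connected v) {v}ᶜ T.edgeSet :=
  ⟨fun _ hx ↦ parent_adj hT.connected hx, injOn_parentEdge hT.connected v, surjOn_parentEdge hT v⟩

end Parent

section ObliqueNeighbor

variable {G T : SimpleGraph V} {v x a b : V}

theorem isObliqueNbr_mk_iff_of_dist_lt (hlt : T.dist v a < T.dist v b) :
    IsObliqueNbr G T s(a, b) v ↔ G.Adj v b := by
  refine ⟨?_, fun hadj ↦ ⟨a, b, rfl, hlt, hadj⟩⟩
  rintro ⟨c, d, he, hcd, hadj⟩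
  rcases Sym2.eq_iff.mp he with ⟨rfl, rfl⟩ | ⟨rfl, rfl⟩
  · exact hadj
  · exact absurd hcd hlt.asymm

theorem isObliqueNbr_parentEdge_iff (hT : T.Connected) (hx : x ≠ v) :
    IsObliqueNbr G T (parentEdge hT v x) v ↔ G.Adj v x :=
  isObliqueNbr_mk_iff_of_dist_lt (dist_parent_lt hT hx)

theorem bijOn_parentEdge_neighborSet (G : SimpleGraph V) (hT : T.IsTree) (v : V) :
    Set.BijOn (parentEdge hT.connected v) (G.neighborSet v)
      {e | e ∈ T.edgeSet ∧ IsObliqueNbr G T e v} := by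
  have hpreimage : {v}ᶜ ∩ parentEdge hT.connected v ⁻¹'
      {e | e ∈ T.edgeSet ∧ IsObliqueNbr G T e v} = G.neighborSet v := by
    ext x
    constructor
    · rintro ⟨hx, -, hoblique⟩
      exact (isObliqueNbr_parentEdge_iff hT.connected hx).mp hoblique
    · intro (hadj : G.Adj v x)
      exact ⟨hadj.ne', parent_adj hT.connected hadj.ne',
        (isObliqueNbr_parentEdge_iff hT.connected hadj.ne').mpr hadj⟩
  exact hpreimage ▸ (bijOn_parentEdge hT v).subset_right fun _ he ↦ he.1

end ObliqueNeighbor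

theorem stmt16_general (G T : SimpleGraph V) (hTree : T.IsTree) (v : V) :
    {e | e ∈ T.edgeSet ∧ IsObliqueNbr G T e v}.encard = (G.neighborSet v).encard :=
  (Set.encard_congr (bijOn_parentEdge_neighborSet G hTree v).equiv).symm

/-- For a spanning tree `T` of a connected graph `G` and any vertex `v`, the
number of edges of `T` having `v` as an oblique neighbor with respect to `T` equals the
degree of `v` in `G`. -/
theorem stmt16 {V : Type*} [Fintype V] (G T : SimpleGraph V) (hG : G.Connected)
    (hT : T ≤ G) (hTree : T.IsTree) (v : V) :
    {e | e ∈ T.edgeSet ∧ IsObliqueNbr G T e v}.ncard = G.degree v := by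
  rw [Set.ncard, stmt16_general G T hTree v, ← Set.ncard, Set.ncard_eq_toFinset_card',
    ← neighborFinset_def, card_neighborFinset_eq_degree]
end
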